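/- arXiv:1502.07263 — 5 statements merged into one kernel-verified Lean document; each statement's English description precedes it below -/
import Mathlib

section
/- Fix d ∈ ℕ, a smooth function U : ℝ^d → ℝ with ‖∇²U‖_∞ < ∞, and a constant σ > 0, and let L be the kinetic Langevin operator L h = −y·∇_x h + (∇U(x) − y/σ)·∇_y h + Δ_y h. Then for every smooth h : ℝ^d × ℝ^d → ℝ, pointwise on ℝ^d × ℝ^d, (1/2) L(|∇_x h + ∇_y h|²) − (∇_x h + ∇_y h)·((∇_x + ∇_y)(Lh)) ≥ (1/2)|∇_x h|² − (‖∇²U‖_∞ + 1 + 1/σ)² |∇_y h|². -/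
noncomputable section

open scoped BigOperators

open scoped BigOperators

/-- Partial derivative in the `i`-th `x`-direction of `f : ℝ^d × ℝ^d → ℝ`. -/
def pdx {d : ℕ} (i : Fin d) (f : (Fin d → ℝ) × (Fin d → ℝ) → ℝ)
    (z : (Fin d → ℝ) × (Fin d → ℝ)) : ℝ :=
  fderiv ℝ f z (Pi.single i (1 : ℝ), 0)

/-- Partial derivative in the `i`-th `y`-direction of `f : ℝ^d × ℝ^d → ℝ`. -/
def pdy {d : ℕ} (i : Fin d) (f : (Fin d → ℝ) × (Fin d → ℝ) → ℝ)
    (z : (Fin d → ℝ) × (Fin d → ℝ)) : ℝ :=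
  fderiv ℝ f z (0, Pi.single i (1 : ℝ))

/-- `i`-th component of `∇U`. -/
def gradU {d : ℕ} (U : (Fin d → ℝ) → ℝ) (i : Fin d) (x : Fin d → ℝ) : ℝ :=
  fderiv ℝ U x (Pi.single i (1 : ℝ))

/-- `(i,j)` entry of the Hessian matrix `∇²U`. -/
def hessU {d : ℕ} (U : (Fin d → ℝ) → ℝ) (i j : Fin d) (x : Fin d → ℝ) : ℝ :=
  fderiv ℝ (fun u => fderiv ℝ U u (Pi.single j (1 : ℝ))) x (Pi.single i (1 : ℝ))

/-- The kinetic Langevin operator `L h = −y·∇ₓh + (∇U(x) − y/σ)·∇_y h + Δ_y h`. -/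
def langevin {d : ℕ} (U : (Fin d → ℝ) → ℝ) (σ : ℝ)
    (f : (Fin d → ℝ) × (Fin d → ℝ) → ℝ) (z : (Fin d → ℝ) × (Fin d → ℝ)) : ℝ :=
  (∑ i, -(z.2 i) * pdx i f z)
    + (∑ i, (gradU U i z.1 - z.2 i / σ) * pdy i f z)
    + ∑ i, pdy i (fun w => pdy i f w) z

/-- The supremum over x of the Frobenius norm of the Hessian of U, i.e. ‖∇²U‖_∞. -/
def hessNormInf {d : ℕ} (U : (Fin d → ℝ) → ℝ) : ℝ :=
  ⨆ x : Fin d → ℝ, Real.sqrt (∑ i, ∑ j, (hessU U i j x) ^ 2)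

/-! The operator has the form `L = X + ∑ⱼ ∂_{vⱼ}²` with drift `X = (-y, ∇U(x) - y / σ)` and
constant directions `vⱼ = (0, eⱼ)`. Put `Gᵢ = ∂_{xᵢ} h + ∂_{yᵢ} h`, the derivative of `h` along
`(eᵢ, eᵢ)`. The chain rule gives `(1/2) L(|G|²) - G · L G = ∑ᵢⱼ (∂_{yⱼ} Gᵢ)² ≥ 0`, and exchanging
`L` with the derivative along the constant vector `a = (eᵢ, eᵢ)` only costs the commutator
`[∂_a, L] = ∂_{DX a}`, which is of first order. Hence the left-hand side is at least
`(∇ₓh + ∇_y h) · (∇ₓh - ∇²U ∇_y h + ∇_y h / σ)`, and Young's inequality applied to the part of this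
product that is linear in `∇ₓh` finishes the proof. -/

section DiffusionOperator

variable {E ι κ : Type*} [NormedAddCommGroup E] [NormedSpace ℝ E] [Fintype ι]

/-- The directional derivative `∂_v f`, with the point as last argument so that it can be iterated;
`pdx i` and `pdy i` are by definition the cases `v = (eᵢ, 0)` and `v = (0, eᵢ)`. -/
def dirDeriv (v : E) (f : E → ℝ) (z : E) : ℝ :=
  fderiv ℝ f z v

/-- The second-order differential operator `X · ∇ + ∑ⱼ ∂_{vⱼ}²` with drift vector field `X` and
constant diffusion directions `vⱼ`. -/
def diffusionOperator (X : E → E) (v : ι → E) (f : E → ℝ) (z : E) : ℝ :=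
  dirDeriv (X z) f z + ∑ j, dirDeriv (v j) (dirDeriv (v j) f) z

variable {X : E → E} {f : E → ℝ} {z : E} {s : Finset κ} {F : κ → E → ℝ}

theorem contDiff_dirDeriv {m n : WithTop ℕ∞} (v : E) (hf : ContDiff ℝ n f) (hmn : m + 1 ≤ n) :
    ContDiff ℝ m (dirDeriv v f) :=
  (hf.fderiv_right hmn).clm_apply contDiff_const

theorem differentiable_dirDeriv (v : E) (hf : ContDiff ℝ 2 f) : Differentiable ℝ (dirDeriv v f) :=
  (contDiff_dirDeriv (m := 1) v hf (by norm_num)).differentiable one_ne_zero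

theorem dirDeriv_comm (v w : E) (hf : ContDiffAt ℝ 2 f z) :
    dirDeriv v (dirDeriv w f) z = dirDeriv w (dirDeriv v f) z := by
  have hbracket := VectorField.fderiv_apply_lieBracket hf (by simp)
    (differentiableAt_const w) (differentiableAt_const v)
  simp only [VectorField.lieBracket, fderiv_fun_const, Pi.zero_apply, zero_apply, sub_self,
    map_zero] at hbracket
  exact sub_eq_zero.mp hbracket.symm

theorem dirDeriv_add (v : E) {g : E → ℝ} (hf : DifferentiableAt ℝ f z)
    (hg : DifferentiableAt ℝ g z) :
    dirDeriv v (fun w => f w + g w) z = dirDeriv v f z + dirDeriv v g z := by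
  simp only [dirDeriv, fderiv_fun_add hf hg, add_apply]

theorem dirDeriv_sum (v : E) (hF : ∀ i ∈ s, DifferentiableAt ℝ (F i) z) :
    dirDeriv v (fun w => ∑ i ∈ s, F i w) z = ∑ i ∈ s, dirDeriv v (F i) z := by
  simp only [dirDeriv, fderiv_fun_sum hF, sum_apply]

theorem dirDeriv_sq (v : E) (hf : DifferentiableAt ℝ f z) :
    dirDeriv v (fun w => f w ^ 2) z = 2 * (f z * dirDeriv v f z) := by
  simp [dirDeriv, fderiv_fun_pow 2 hf, mul_assoc]

theorem dirDeriv_dirDeriv_sq (v : E) (hf : ContDiff ℝ 2 f) :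
    dirDeriv v (dirDeriv v fun w => f w ^ 2) z
      = 2 * (f z * dirDeriv v (dirDeriv v f) z + dirDeriv v f z ^ 2) := by
  have hf' : Differentiable ℝ f := hf.differentiable two_ne_zero
  have hfirst : dirDeriv v (fun w => f w ^ 2) = fun w => 2 * (f w * dirDeriv v f w) :=
    funext fun w => dirDeriv_sq v (hf' w)
  rw [hfirst]
  conv_lhs => rw [dirDeriv]
  rw [fderiv_const_mul ((hf' z).fun_mul (differentiable_dirDeriv v hf z)),
    fderiv_fun_mul (hf' z) (differentiable_dirDeriv v hf z)]
  simp only [add_apply, smul_apply, smul_eq_mul, dirDeriv]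
  ring

theorem diffusionOperator_sum (X : E → E) (v : ι → E) (hF : ∀ i ∈ s, ContDiff ℝ 2 (F i)) :
    diffusionOperator X v (fun w => ∑ i ∈ s, F i w) z
      = ∑ i ∈ s, diffusionOperator X v (F i) z := by
  have hfirst (a : E) :
      dirDeriv a (fun w => ∑ i ∈ s, F i w) = fun w => ∑ i ∈ s, dirDeriv a (F i) w :=
    funext fun w => dirDeriv_sum a fun i hi => (hF i hi).differentiable two_ne_zero w
  have hsecond (a : E) : dirDeriv a (fun w => ∑ i ∈ s, dirDeriv a (F i) w) z
      = ∑ i ∈ s, dirDeriv a (dirDeriv a (F i)) z :=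
    dirDeriv_sum a fun i hi => differentiable_dirDeriv a (hF i hi) z
  simp only [diffusionOperator, hfirst, hsecond, Finset.sum_add_distrib]
  rw [Finset.sum_comm]

theorem half_diffusionOperator_sq (X : E → E) (v : ι → E) (hf : ContDiff ℝ 2 f) :
    (1 / 2) * diffusionOperator X v (fun w => f w ^ 2) z
      = f z * diffusionOperator X v f z + ∑ j, dirDeriv (v j) f z ^ 2 := by
  simp only [diffusionOperator, dirDeriv_sq _ (hf.differentiable two_ne_zero z),
    dirDeriv_dirDeriv_sq _ hf, ← Finset.mul_sum, Finset.sum_add_distrib]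
  ring

theorem sum_mul_diffusionOperator_le (X : E → E) (v : ι → E) (hF : ∀ i ∈ s, ContDiff ℝ 2 (F i)) :
    ∑ i ∈ s, F i z * diffusionOperator X v (F i) z
      ≤ (1 / 2) * diffusionOperator X v (fun w => ∑ i ∈ s, F i w ^ 2) z := by
  rw [diffusionOperator_sum X v fun i hi => (hF i hi).pow 2, Finset.mul_sum]
  refine Finset.sum_le_sum fun i hi => ?_
  rw [half_diffusionOperator_sq X v (hF i hi)]
  exact le_add_of_nonneg_right (Finset.sum_nonneg fun j _ => sq_nonneg _)

theorem dirDeriv_dirDeriv_vectorField (a : E) (hX : DifferentiableAt ℝ X z)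
    (hf : ContDiffAt ℝ 2 f z) :
    dirDeriv a (fun w => dirDeriv (X w) f w) z
      = dirDeriv (X z) (dirDeriv a f) z + dirDeriv (fderiv ℝ X z a) f z := by
  have hbracket := VectorField.fderiv_apply_lieBracket hf (by simp) hX (differentiableAt_const a)
  simp only [VectorField.lieBracket, fderiv_fun_const, Pi.zero_apply, zero_apply,
    sub_zero] at hbracket
  exact sub_eq_iff_eq_add'.mp hbracket.symm

theorem dirDeriv_diffusionOperator (v : ι → E) (a : E) (hX : DifferentiableAt ℝ X z)
    (hf : ContDiff ℝ 3 f) :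
    dirDeriv a (diffusionOperator X v f) z
      = diffusionOperator X v (dirDeriv a f) z + dirDeriv (fderiv ℝ X z a) f z := by
  have hf₂ : ContDiff ℝ 2 f := hf.of_le (by norm_num)
  have hdf (w : E) : ContDiff ℝ 2 (dirDeriv w f) := contDiff_dirDeriv w hf (by norm_num)
  have hdrift : DifferentiableAt ℝ (fun w => dirDeriv (X w) f w) z :=
    ((hf₂.fderiv_right (m := 1) (by norm_num)).differentiable one_ne_zero z).clm_apply hX
  have hsecond (j : ι) : DifferentiableAt ℝ (dirDeriv (v j) (dirDeriv (v j) f)) z :=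
    differentiable_dirDeriv (v j) (hdf (v j)) z
  have hswap (j : ι) : dirDeriv a (dirDeriv (v j) (dirDeriv (v j) f)) z
      = dirDeriv (v j) (dirDeriv (v j) (dirDeriv a f)) z := by
    rw [dirDeriv_comm a (v j) (hdf (v j)).contDiffAt]
    congr 1
    exact funext fun w => dirDeriv_comm a (v j) hf₂.contDiffAt
  unfold diffusionOperator
  rw [dirDeriv_add a hdrift (.fun_sum fun j _ => hsecond j), dirDeriv_sum a fun j _ => hsecond j,
    dirDeriv_dirDeriv_vectorField a hX hf₂.contDiffAt, Finset.sum_congr rfl fun j _ => hswap j]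
  ring

end DiffusionOperator

section Langevin

variable {d : ℕ} {U : (Fin d → ℝ) → ℝ} {f : (Fin d → ℝ) × (Fin d → ℝ) → ℝ}
  {z : (Fin d → ℝ) × (Fin d → ℝ)}

/-- The drift `(x, y) ↦ (-y, ∇U(x) - y / σ)` of the kinetic Langevin operator. -/
def langevinDrift (U : (Fin d → ℝ) → ℝ) (σ : ℝ) (z : (Fin d → ℝ) × (Fin d → ℝ)) :
    (Fin d → ℝ) × (Fin d → ℝ) :=
  (-z.2, fun i => gradU U i z.1 - z.2 i / σ)

theorem dirDeriv_eq_sum_pdx_add_sum_pdy (v : (Fin d → ℝ) × (Fin d → ℝ)) :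
    dirDeriv v f z = (∑ i, v.1 i * pdx i f z) + ∑ i, v.2 i * pdy i f z := by
  have hv : v = (∑ i, v.1 i • ((Pi.single i (1 : ℝ), 0) : (Fin d → ℝ) × (Fin d → ℝ)))
      + ∑ i, v.2 i • ((0, Pi.single i (1 : ℝ)) : (Fin d → ℝ) × (Fin d → ℝ)) := by
    ext i <;> simp [Prod.fst_sum, Prod.snd_sum, Finset.sum_apply, Pi.single_apply]
  conv_lhs => rw [dirDeriv, hv]
  simp only [map_add, map_sum, map_smul, smul_eq_mul, pdx, pdy]

theorem pdx_add_pdy (i : Fin d) :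
    pdx i f z + pdy i f z = dirDeriv (Pi.single i 1, Pi.single i 1) f z := by
  simp [dirDeriv, pdx, pdy, ← map_add]

theorem langevin_eq_diffusionOperator (U : (Fin d → ℝ) → ℝ) (σ : ℝ) :
    langevin U σ
      = diffusionOperator (langevinDrift U σ) fun j : Fin d => (0, Pi.single j (1 : ℝ)) := by
  ext f z
  rw [diffusionOperator, dirDeriv_eq_sum_pdx_add_sum_pdy]
  rfl

theorem hasFDerivAt_langevinDrift (hU : ContDiff ℝ 2 U) (σ : ℝ) :
    HasFDerivAt (langevinDrift U σ)
      ((-ContinuousLinearMap.snd ℝ (Fin d → ℝ) (Fin d → ℝ)).prod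
        (ContinuousLinearMap.pi fun i => (fderiv ℝ (gradU U i) z.1).comp (.fst ℝ _ _)
          - σ⁻¹ • (ContinuousLinearMap.proj i).comp (.snd ℝ _ _))) z := by
  have hgrad (i : Fin d) : DifferentiableAt ℝ (gradU U i) z.1 :=
    differentiable_dirDeriv (Pi.single i 1) hU z.1
  refine hasFDerivAt_snd.neg.prodMk (hasFDerivAt_pi.mpr fun i => ?_)
  refine ((hgrad i).hasFDerivAt.comp z hasFDerivAt_fst).sub ?_
  simp only [div_eq_inv_mul]
  exact (((ContinuousLinearMap.proj i).comp (.snd ℝ _ _)).hasFDerivAt (x := z)).const_mul σ⁻¹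

theorem pdx_add_pdy_langevin (hU : ContDiff ℝ 2 U) (σ : ℝ) (hf : ContDiff ℝ 3 f) (i : Fin d) :
    pdx i (langevin U σ f) z + pdy i (langevin U σ f) z
      = langevin U σ (fun w => pdx i f w + pdy i f w) z
        - (pdx i f z - ∑ j, hessU U i j z.1 * pdy j f z + 1 / σ * pdy i f z) := by
  have hX := hasFDerivAt_langevinDrift (z := z) hU σ
  have hDX : fderiv ℝ (langevinDrift U σ) z (Pi.single i 1, Pi.single i 1)
      = (-Pi.single i 1, fun j => hessU U i j z.1 - (Pi.single i 1 : Fin d → ℝ) j / σ) := by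
    rw [hX.fderiv]
    ext j
    · rfl
    · change hessU U i j z.1 - σ⁻¹ * (Pi.single i 1 : Fin d → ℝ) j = _
      rw [inv_mul_eq_div]
  have hcommutator : dirDeriv (fderiv ℝ (langevinDrift U σ) z (Pi.single i 1, Pi.single i 1)) f z
      = -(pdx i f z - ∑ j, hessU U i j z.1 * pdy j f z + 1 / σ * pdy i f z) := by
    have hx : ∑ j, (-Pi.single i 1 : Fin d → ℝ) j * pdx j f z = -pdx i f z := by
      simp [Pi.single_apply]
    have hy : ∑ j, (Pi.single i 1 : Fin d → ℝ) j / σ * pdy j f z = 1 / σ * pdy i f z := by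
      simp [Pi.single_apply, ite_div]
    rw [hDX, dirDeriv_eq_sum_pdx_add_sum_pdy, hx]
    simp only [sub_mul, Finset.sum_sub_distrib, hy]
    ring
  simp only [pdx_add_pdy]
  rw [langevin_eq_diffusionOperator, dirDeriv_diffusionOperator _ _ hX.differentiableAt hf,
    hcommutator]
  rfl

end Langevin

section QuadraticForm

open RealInnerProductSpace

theorem norm_toLp_mulVec_le {m n : Type*} [Fintype m] [Fintype n] (A : Matrix m n ℝ) (b : n → ℝ) :
    ‖WithLp.toLp 2 (A.mulVec b)‖ ≤ √(∑ i, ∑ j, A i j ^ 2) * ‖WithLp.toLp 2 b‖ := by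
  simp only [EuclideanSpace.norm_eq, Real.norm_eq_abs, sq_abs]
  rw [← Real.sqrt_mul (by positivity), Finset.sum_mul]
  exact Real.sqrt_le_sqrt
    (Finset.sum_le_sum fun i _ => Finset.sum_mul_sq_le_sq_mul_sq Finset.univ (A i) b)

theorem half_norm_sq_sub_le_inner {V : Type*} [NormedAddCommGroup V] [InnerProductSpace ℝ V]
    {a b w : V} {K s : ℝ} (hK : 0 ≤ K) (hs : 0 ≤ s) (hw : ‖w‖ ≤ K * ‖b‖) :
    (1 / 2) * ‖a‖ ^ 2 - (K + 1 + s) ^ 2 * ‖b‖ ^ 2 ≤ ⟪a + b, a - w + s • b⟫ := by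
  set c : V := (1 + s) • b - w with hc
  have hexpand : ⟪a + b, a - w + s • b⟫ = ‖a‖ ^ 2 + ⟪a, c⟫ - ⟪b, w⟫ + s * ‖b‖ ^ 2 := by
    simp only [hc, inner_add_left, inner_add_right, inner_sub_right, real_inner_smul_right,
      real_inner_self_eq_norm_sq, real_inner_comm a b]
    ring
  have hyoung : 0 ≤ ‖a‖ ^ 2 + 2 * ⟪a, c⟫ + ‖c‖ ^ 2 := norm_add_sq_real a c ▸ sq_nonneg _
  have hc_sq : ‖c‖ ^ 2 ≤ (K + 1 + s) ^ 2 * ‖b‖ ^ 2 := by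
    have hc_norm : ‖c‖ ≤ (K + 1 + s) * ‖b‖ :=
      calc ‖c‖ ≤ ‖(1 + s) • b‖ + ‖w‖ := norm_sub_le _ _
        _ ≤ (1 + s) * ‖b‖ + K * ‖b‖ := by
          rw [norm_smul, Real.norm_of_nonneg (by positivity)]
          gcongr
        _ = (K + 1 + s) * ‖b‖ := by ring
    rw [← mul_pow]
    gcongr
  have hbw : ⟪b, w⟫ ≤ K * ‖b‖ ^ 2 :=
    calc ⟪b, w⟫ ≤ ‖b‖ * ‖w‖ := real_inner_le_norm b w
      _ ≤ ‖b‖ * (K * ‖b‖) := by gcongr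
      _ = K * ‖b‖ ^ 2 := by ring
  have hconst : 0 ≤ ((K + 1 + s) ^ 2 / 2 - K + s) * ‖b‖ ^ 2 := by
    refine mul_nonneg ?_ (sq_nonneg _)
    nlinarith [mul_nonneg hK hs]
  linarith

theorem half_sum_sq_sub_le_sum_mul {ι : Type*} [Fintype ι] (A : ι → ι → ℝ) (a b : ι → ℝ)
    {s : ℝ} (hs : 0 ≤ s) :
    (1 / 2) * (∑ i, a i ^ 2) - (√(∑ i, ∑ j, A i j ^ 2) + 1 + s) ^ 2 * ∑ i, b i ^ 2
      ≤ ∑ i, (a i + b i) * (a i - ∑ j, A i j * b j + s * b i) := by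
  have hinner := half_norm_sq_sub_le_inner (a := WithLp.toLp 2 a) (Real.sqrt_nonneg _) hs
    (norm_toLp_mulVec_le (.of A) b)
  simpa [EuclideanSpace.real_norm_sq_eq, PiLp.inner_apply, Matrix.mulVec, dotProduct,
    mul_comm] using hinner

end QuadraticForm

theorem stmt2_general {d : ℕ} {U : (Fin d → ℝ) → ℝ} (hU : ContDiff ℝ 2 U) {σ : ℝ} (hσ : 0 < σ)
    {h : (Fin d → ℝ) × (Fin d → ℝ) → ℝ} (hh : ContDiff ℝ 3 h) (z : (Fin d → ℝ) × (Fin d → ℝ)) :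
    (1 / 2) * langevin U σ (fun w => ∑ i, (pdx i h w + pdy i h w) ^ 2) z
        - (∑ i, (pdx i h z + pdy i h z)
            * (pdx i (langevin U σ h) z + pdy i (langevin U σ h) z))
      ≥ (1 / 2) * (∑ i, (pdx i h z) ^ 2)
        - (√(∑ i, ∑ j, (hessU U i j z.1) ^ 2) + 1 + 1 / σ) ^ 2 * ∑ i, (pdy i h z) ^ 2 := by
  have hcarre : ∑ i, (pdx i h z + pdy i h z) * langevin U σ (fun w => pdx i h w + pdy i h w) z
      ≤ (1 / 2) * langevin U σ (fun w => ∑ i, (pdx i h w + pdy i h w) ^ 2) z := by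
    rw [langevin_eq_diffusionOperator]
    refine sum_mul_diffusionOperator_le (F := fun i w => pdx i h w + pdy i h w) _ _ fun i _ => ?_
    simpa only [pdx_add_pdy] using contDiff_dirDeriv _ hh (by norm_num)
  have hquad := half_sum_sq_sub_le_sum_mul (fun i j => hessU U i j z.1) (fun i => pdx i h z)
    (fun i => pdy i h z) (one_div_nonneg.mpr hσ.le)
  simp only [pdx_add_pdy_langevin hU σ hh, mul_sub _ (langevin _ _ _ _), Finset.sum_sub_distrib]
  linarith

/-- For the kinetic Langevin operator and the quadratic functional
Φ(h) = |∇ₓh + ∇_y h|², pointwise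
Γ_{L,Φ}(h) ≥ (1/2)|∇ₓh|² − (‖∇²U‖_∞ + 1 + 1/σ)²|∇_y h|². -/
theorem stmt2 {d : ℕ} (U : (Fin d → ℝ) → ℝ) (hU : ContDiff ℝ (⊤ : ℕ∞) U)
    (hK : BddAbove (Set.range fun x : Fin d → ℝ =>
      Real.sqrt (∑ i, ∑ j, (hessU U i j x) ^ 2)))
    (σ : ℝ) (hσ : 0 < σ)
    (h : (Fin d → ℝ) × (Fin d → ℝ) → ℝ) (hh : ContDiff ℝ (⊤ : ℕ∞) h)
    (z : (Fin d → ℝ) × (Fin d → ℝ)) :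
    (1 / 2) * langevin U σ (fun w => ∑ i, (pdx i h w + pdy i h w) ^ 2) z
        - (∑ i, (pdx i h z + pdy i h z)
            * (pdx i (langevin U σ h) z + pdy i (langevin U σ h) z))
      ≥ (1 / 2) * (∑ i, (pdx i h z) ^ 2)
        - (hessNormInf U + 1 + 1 / σ) ^ 2 * ∑ i, (pdy i h z) ^ 2 := by
  refine le_trans ?_ (stmt2_general (contDiff_infty.mp hU 2) hσ (contDiff_infty.mp hh 3) z)
  gcongr
  exact le_ciSup hK z.1
end
end

section
/- Let b : ℝ^n → ℝ^n be a smooth vector field and B : ℝ^n → (symmetric positive semidefinite n×n matrices) a smooth matrix field, and define the diffusion operator L f = b·∇f + ∇·(B∇f). Let M be a constant real k×n matrix. Then for every smooth h : ℝ^n → (0,∞), pointwise on ℝ^n, (1/2) L(|M∇h|²/h) − (M∇h)·M∇(Lh)/h + |M∇h|² Lh/(2h²) ≥ (M∇h)·([L, M∇]h)/h, where [L, M∇]h denotes the vector with components L((M∇h)_i) − (M∇(Lh))_i, i = 1,…,k. -/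
noncomputable section

open scoped BigOperators

/-- Partial derivative of `f : ℝ^n → ℝ` in the `i`-th coordinate direction. -/
def pd {n : ℕ} (i : Fin n) (f : (Fin n → ℝ) → ℝ) (x : Fin n → ℝ) : ℝ :=
  fderiv ℝ f x (Pi.single i (1 : ℝ))

/-- Diffusion operator `L f = b·∇f + ∇·(B∇f)` with variable diffusion matrix field `B`. -/
def diffOpV {n : ℕ} (b : (Fin n → ℝ) → Fin n → ℝ)
    (B : (Fin n → ℝ) → Matrix (Fin n) (Fin n) ℝ)
    (f : (Fin n → ℝ) → ℝ) (x : Fin n → ℝ) : ℝ :=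
  (∑ i, b x i * pd i f x) + ∑ i, pd i (fun z => ∑ j, B z i j * pd j f z) x

/-- The `i`-th component of `M ∇ f`. -/
def Mgrad {n k : ℕ} (M : Matrix (Fin k) (Fin n) ℝ) (f : (Fin n → ℝ) → ℝ)
    (x : Fin n → ℝ) (i : Fin k) : ℝ :=
  ∑ j, M i j * pd j f x

/-!
Writing `u` for a component of `M∇h` and `v = u / h`, the function `u² / h` is `h v²`, and the
product rule `L(fg) = f Lg + g Lf + 2 Γ(f, g)` yields the exact identity
`½ L(h v²) + ½ v² Lh - v L(h v) = h Γ(v, v)`, whose right-hand side is nonnegative.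
The terms `(M∇h)·M∇(Lh)/h` on the two sides of the inequality cancel, and what remains holds for an
arbitrary vector field in place of `M∇h`.
-/

section

open scoped Matrix Topology

theorem eventually_differentiableAt_of_contDiffAt {𝕜 E F : Type*} [NontriviallyNormedField 𝕜]
    [NormedAddCommGroup E] [NormedSpace 𝕜 E] [NormedAddCommGroup F] [NormedSpace 𝕜 F]
    {f : E → F} {x : E} {k : WithTop ℕ∞} (hf : ContDiffAt 𝕜 k f x) (hk : k ≠ 0) :
    ∀ᶠ z in 𝓝 x, DifferentiableAt 𝕜 f z :=
  ((hf.of_le (ENat.one_le_iff_ne_zero_withTop.2 hk)).eventually (by simp)).mono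
    fun _ hz => hz.differentiableAt one_ne_zero

variable {n : ℕ} {ι : Type*} {f g : (Fin n → ℝ) → ℝ} {x : Fin n → ℝ}

theorem pd_add (i : Fin n) (hf : DifferentiableAt ℝ f x) (hg : DifferentiableAt ℝ g x) :
    pd i (fun z => f z + g z) x = pd i f x + pd i g x := by
  simp only [pd, fderiv_fun_add hf hg, add_apply]

theorem pd_mul (i : Fin n) (hf : DifferentiableAt ℝ f x) (hg : DifferentiableAt ℝ g x) :
    pd i (fun z => f z * g z) x = f x * pd i g x + g x * pd i f x := by
  simp only [pd, fderiv_fun_mul hf hg, add_apply, smul_apply, smul_eq_mul]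

theorem pd_sum (i : Fin n) {s : Finset ι} {F : ι → (Fin n → ℝ) → ℝ}
    (hF : ∀ l ∈ s, DifferentiableAt ℝ (F l) x) :
    pd i (fun z => ∑ l ∈ s, F l z) x = ∑ l ∈ s, pd i (F l) x := by
  simp only [pd, fderiv_fun_sum hF, sum_apply]

theorem pd_congr (i : Fin n) (hfg : f =ᶠ[𝓝 x] g) : pd i f x = pd i g x := by
  simp only [pd, hfg.fderiv_eq]

/-- The gradient of `f` as the plain vector of its partial derivatives: `Fin n → ℝ` carries no
inner product, so Mathlib's `gradient` does not apply. -/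
def grad (f : (Fin n → ℝ) → ℝ) (x : Fin n → ℝ) : Fin n → ℝ :=
  fun i => pd i f x

theorem grad_mul (hf : DifferentiableAt ℝ f x) (hg : DifferentiableAt ℝ g x) :
    grad (fun z => f z * g z) x = f x • grad g x + g x • grad f x :=
  funext fun i => pd_mul i hf hg

theorem grad_sum {s : Finset ι} {F : ι → (Fin n → ℝ) → ℝ}
    (hF : ∀ l ∈ s, DifferentiableAt ℝ (F l) x) :
    grad (fun z => ∑ l ∈ s, F l z) x = ∑ l ∈ s, grad (F l) x := by
  ext i
  rw [Finset.sum_apply]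
  exact pd_sum i hF

theorem grad_congr (hfg : f =ᶠ[𝓝 x] g) : grad f x = grad g x :=
  funext fun i => pd_congr i hfg

theorem contDiffAt_grad {m k : WithTop ℕ∞} (hf : ContDiffAt ℝ k f x) (hmk : m + 1 ≤ k) :
    ContDiffAt ℝ m (grad f) x :=
  contDiffAt_pi.2 fun _ => (hf.fderiv_right hmk).clm_apply contDiffAt_const

theorem contDiffAt_Mgrad {k : ℕ} {m p : WithTop ℕ∞} (M : Matrix (Fin k) (Fin n) ℝ)
    (hf : ContDiffAt ℝ p f x) (hmp : m + 1 ≤ p) : ContDiffAt ℝ m (Mgrad M f) x :=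
  contDiffAt_pi.2 fun _ => ContDiffAt.sum fun j _ =>
    contDiffAt_const.mul (contDiffAt_pi.1 (contDiffAt_grad hf hmp) j)

theorem differentiableAt_mulVec_grad {k : ℕ} {A : (Fin n → ℝ) → Matrix (Fin k) (Fin n) ℝ}
    (hA : ∀ i j, DifferentiableAt ℝ (fun z => A z i j) x) (hf : ContDiffAt ℝ 2 f x) :
    DifferentiableAt ℝ (fun z => A z *ᵥ grad f z) x := by
  have hgrad : DifferentiableAt ℝ (grad f) x :=
    (contDiffAt_grad hf one_add_one_eq_two.le).differentiableAt one_ne_zero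
  refine differentiableAt_pi.2 fun i => ?_
  simp only [Matrix.mulVec, dotProduct]
  exact DifferentiableAt.fun_sum fun j _ => (hA i j).fun_mul (differentiableAt_pi.1 hgrad j)

/-- The divergence `∑ i, ∂ᵢ Fᵢ` of a vector field `F`, the outer operator in `∇·(B∇f)`. -/
def divergence (F : (Fin n → ℝ) → Fin n → ℝ) (x : Fin n → ℝ) : ℝ :=
  ∑ i, pd i (fun z => F z i) x

theorem divergence_add {F G : (Fin n → ℝ) → Fin n → ℝ}
    (hF : DifferentiableAt ℝ F x) (hG : DifferentiableAt ℝ G x) :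
    divergence (fun z => F z + G z) x = divergence F x + divergence G x := by
  simp only [divergence, ← Finset.sum_add_distrib]
  exact Finset.sum_congr rfl fun i _ =>
    pd_add i (differentiableAt_pi.1 hF i) (differentiableAt_pi.1 hG i)

theorem divergence_smul {F : (Fin n → ℝ) → Fin n → ℝ}
    (hf : DifferentiableAt ℝ f x) (hF : DifferentiableAt ℝ F x) :
    divergence (fun z => f z • F z) x = f x * divergence F x + grad f x ⬝ᵥ F x := by
  simp only [divergence, dotProduct, Finset.mul_sum, ← Finset.sum_add_distrib]
  refine Finset.sum_congr rfl fun i _ => ?_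
  rw [grad, mul_comm (pd i f x)]
  exact pd_mul i hf (differentiableAt_pi.1 hF i)

theorem divergence_sum {s : Finset ι} {F : ι → (Fin n → ℝ) → Fin n → ℝ}
    (hF : ∀ l ∈ s, DifferentiableAt ℝ (F l) x) :
    divergence (fun z => ∑ l ∈ s, F l z) x = ∑ l ∈ s, divergence (F l) x := by
  simp only [divergence, Finset.sum_apply]
  rw [Finset.sum_comm]
  exact Finset.sum_congr rfl fun i _ =>
    pd_sum i fun l hl => differentiableAt_pi.1 (hF l hl) i

theorem divergence_congr {F G : (Fin n → ℝ) → Fin n → ℝ} (hFG : F =ᶠ[𝓝 x] G) :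
    divergence F x = divergence G x :=
  Finset.sum_congr rfl fun i _ => pd_congr i (hFG.mono fun _ hz => congrFun hz i)

/-- The carré du champ `Γ(f, g) = ∇f · A∇g` of the diffusion operator whose diffusion matrix at
the point `x` is `A`. -/
def carreDuChamp (A : Matrix (Fin n) (Fin n) ℝ) (f g : (Fin n → ℝ) → ℝ) (x : Fin n → ℝ) : ℝ :=
  grad f x ⬝ᵥ A *ᵥ grad g x

theorem carreDuChamp_comm {A : Matrix (Fin n) (Fin n) ℝ} (hA : A.IsSymm)
    (f g : (Fin n → ℝ) → ℝ) (x : Fin n → ℝ) :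
    carreDuChamp A f g x = carreDuChamp A g f x := by
  rw [carreDuChamp, carreDuChamp, Matrix.dotProduct_mulVec, ← Matrix.mulVec_transpose,
    hA.eq, dotProduct_comm]

theorem carreDuChamp_mul_left (A : Matrix (Fin n) (Fin n) ℝ) (w : (Fin n → ℝ) → ℝ)
    (hf : DifferentiableAt ℝ f x) (hg : DifferentiableAt ℝ g x) :
    carreDuChamp A (fun z => f z * g z) w x
      = f x * carreDuChamp A g w x + g x * carreDuChamp A f w x := by
  simp only [carreDuChamp, grad_mul hf hg, add_dotProduct, smul_dotProduct, smul_eq_mul]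

theorem carreDuChamp_self_nonneg {A : Matrix (Fin n) (Fin n) ℝ} (hA : A.PosSemidef)
    (f : (Fin n → ℝ) → ℝ) (x : Fin n → ℝ) : 0 ≤ carreDuChamp A f f x :=
  hA.dotProduct_mulVec_nonneg (grad f x)

variable {B : (Fin n → ℝ) → Matrix (Fin n) (Fin n) ℝ}

theorem diffOpV_eq_dotProduct_add_divergence (b : (Fin n → ℝ) → Fin n → ℝ)
    (B : (Fin n → ℝ) → Matrix (Fin n) (Fin n) ℝ) (f : (Fin n → ℝ) → ℝ) (x : Fin n → ℝ) :
    diffOpV b B f x = b x ⬝ᵥ grad f x + divergence (fun z => B z *ᵥ grad f z) x :=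
  rfl

theorem diffOpV_congr (b : (Fin n → ℝ) → Fin n → ℝ)
    (B : (Fin n → ℝ) → Matrix (Fin n) (Fin n) ℝ) (hfg : f =ᶠ[𝓝 x] g) :
    diffOpV b B f x = diffOpV b B g x := by
  have hflux : (fun z => B z *ᵥ grad f z) =ᶠ[𝓝 x] fun z => B z *ᵥ grad g z :=
    hfg.eventuallyEq_nhds.mono fun z hz => congrArg (B z *ᵥ ·) (grad_congr hz)
  simp only [diffOpV_eq_dotProduct_add_divergence, grad_congr hfg, divergence_congr hflux]

theorem diffOpV_sum (b : (Fin n → ℝ) → Fin n → ℝ)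
    (hB : ∀ i j, DifferentiableAt ℝ (fun z => B z i j) x)
    {s : Finset ι} {F : ι → (Fin n → ℝ) → ℝ} (hF : ∀ l ∈ s, ContDiffAt ℝ 2 (F l) x) :
    diffOpV b B (fun z => ∑ l ∈ s, F l z) x = ∑ l ∈ s, diffOpV b B (F l) x := by
  have hflux : (fun z => B z *ᵥ grad (fun y => ∑ l ∈ s, F l y) z)
      =ᶠ[𝓝 x] fun z => ∑ l ∈ s, B z *ᵥ grad (F l) z := by
    filter_upwards [(Filter.eventually_all_finset s).2 fun l hl =>
      eventually_differentiableAt_of_contDiffAt (hF l hl) two_ne_zero] with z hz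
    rw [grad_sum hz, Matrix.mulVec_sum]
  simp only [diffOpV_eq_dotProduct_add_divergence]
  rw [grad_sum fun l hl => (hF l hl).differentiableAt two_ne_zero, dotProduct_sum,
    divergence_congr hflux,
    divergence_sum fun l hl => differentiableAt_mulVec_grad hB (hF l hl),
    Finset.sum_add_distrib]

theorem diffOpV_mul (b : (Fin n → ℝ) → Fin n → ℝ)
    (hB : ∀ i j, DifferentiableAt ℝ (fun z => B z i j) x) (hBsymm : (B x).IsSymm)
    (hf : ContDiffAt ℝ 2 f x) (hg : ContDiffAt ℝ 2 g x) :
    diffOpV b B (fun z => f z * g z) x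
      = f x * diffOpV b B g x + g x * diffOpV b B f x + 2 * carreDuChamp (B x) f g x := by
  have hf' := hf.differentiableAt two_ne_zero
  have hg' := hg.differentiableAt two_ne_zero
  have hFf := differentiableAt_mulVec_grad hB hf
  have hFg := differentiableAt_mulVec_grad hB hg
  have hflux : (fun z => B z *ᵥ grad (fun y => f y * g y) z)
      =ᶠ[𝓝 x] fun z => f z • B z *ᵥ grad g z + g z • B z *ᵥ grad f z := by
    filter_upwards [eventually_differentiableAt_of_contDiffAt hf two_ne_zero,
      eventually_differentiableAt_of_contDiffAt hg two_ne_zero] with z hfz hgz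
    rw [grad_mul hfz hgz, Matrix.mulVec_add, Matrix.mulVec_smul, Matrix.mulVec_smul]
  have hdiv : divergence (fun z => B z *ᵥ grad (fun y => f y * g y) z) x
      = f x * divergence (fun z => B z *ᵥ grad g z) x + carreDuChamp (B x) f g x
        + (g x * divergence (fun z => B z *ᵥ grad f z) x + carreDuChamp (B x) g f x) := by
    rw [divergence_congr hflux, divergence_add (hf'.fun_smul hFg) (hg'.fun_smul hFf),
      divergence_smul hf' hFg, divergence_smul hg' hFf]
    rfl
  simp only [diffOpV_eq_dotProduct_add_divergence]
  rw [hdiv, carreDuChamp_comm hBsymm g f, grad_mul hf' hg', dotProduct_add, dotProduct_smul,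
    dotProduct_smul, smul_eq_mul, smul_eq_mul]
  ring

theorem mul_carreDuChamp_self (b : (Fin n → ℝ) → Fin n → ℝ) {h v : (Fin n → ℝ) → ℝ}
    (hB : ∀ i j, DifferentiableAt ℝ (fun z => B z i j) x) (hBsymm : (B x).IsSymm)
    (hh : ContDiffAt ℝ 2 h x) (hv : ContDiffAt ℝ 2 v x) :
    h x * carreDuChamp (B x) v v x
      = 1 / 2 * diffOpV b B (fun z => h z * v z * v z) x + 1 / 2 * v x ^ 2 * diffOpV b B h x
        - v x * diffOpV b B (fun z => h z * v z) x := by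
  rw [diffOpV_mul b hB hBsymm (hh.mul hv) hv, diffOpV_mul b hB hBsymm hh hv,
    carreDuChamp_mul_left (B x) v (hh.differentiableAt two_ne_zero)
      (hv.differentiableAt two_ne_zero)]
  ring

theorem mul_diffOpV_div_le (b : (Fin n → ℝ) → Fin n → ℝ) {h u : (Fin n → ℝ) → ℝ}
    (hB : ∀ i j, DifferentiableAt ℝ (fun z => B z i j) x) (hBpsd : (B x).PosSemidef)
    (hh : ContDiffAt ℝ 2 h x) (hpos : 0 < h x) (hu : ContDiffAt ℝ 2 u x) :
    u x * diffOpV b B u x / h x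
      ≤ 1 / 2 * diffOpV b B (fun z => u z ^ 2 / h z) x
        + u x ^ 2 * diffOpV b B h x / (2 * h x ^ 2) := by
  have hBsymm : (B x).IsSymm := Matrix.isHermitian_iff_isSymm.1 hBpsd.isHermitian
  have hne : ∀ᶠ z in 𝓝 x, h z ≠ 0 := hh.continuousAt.eventually_ne hpos.ne'
  have hLu : diffOpV b B u x = diffOpV b B (fun z => h z * (u z / h z)) x :=
    diffOpV_congr b B (hne.mono fun z hz => (mul_div_cancel₀ (u z) hz).symm)
  have hLsq : diffOpV b B (fun z => u z ^ 2 / h z) x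
      = diffOpV b B (fun z => h z * (u z / h z) * (u z / h z)) x :=
    diffOpV_congr b B (hne.mono fun z hz => by field_simp)
  have hv : ContDiffAt ℝ 2 (fun z => u z / h z) x := hu.div hh hpos.ne'
  have hΓ := mul_carreDuChamp_self b hB hBsymm hh hv
  have hΓ_nonneg : 0 ≤ h x * carreDuChamp (B x) (fun z => u z / h z) (fun z => u z / h z) x :=
    mul_nonneg hpos.le (carreDuChamp_self_nonneg hBpsd _ x)
  rw [hLu, hLsq, mul_div_right_comm]
  have hcoeff : u x ^ 2 * diffOpV b B h x / (2 * h x ^ 2)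
      = 1 / 2 * (u x / h x) ^ 2 * diffOpV b B h x := by ring
  linarith

theorem stmt5_general [Fintype ι] (b : (Fin n → ℝ) → Fin n → ℝ)
    {h : (Fin n → ℝ) → ℝ} {u : (Fin n → ℝ) → ι → ℝ}
    (hB : ∀ i j, DifferentiableAt ℝ (fun z => B z i j) x) (hBpsd : (B x).PosSemidef)
    (hh : ContDiffAt ℝ 2 h x) (hpos : 0 < h x) (hu : ContDiffAt ℝ 2 u x) :
    (∑ i, u x i * diffOpV b B (fun z => u z i) x) / h x
      ≤ 1 / 2 * diffOpV b B (fun z => (∑ i, u z i ^ 2) / h z) x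
        + (∑ i, u x i ^ 2) * diffOpV b B h x / (2 * h x ^ 2) := by
  have hu' := contDiffAt_pi.1 hu
  have hsq : ∀ i ∈ Finset.univ, ContDiffAt ℝ 2 (fun z => u z i ^ 2 / h z) x :=
    fun i _ => ((hu' i).pow 2).div hh hpos.ne'
  simp only [Finset.sum_div, diffOpV_sum b hB hsq, Finset.mul_sum, Finset.sum_mul,
    ← Finset.sum_add_distrib]
  exact Finset.sum_le_sum fun i _ => mul_diffOpV_div_le b hB hBpsd hh hpos (hu' i)

end

/-- For the diffusion operator `L` and the Fisher-information-like functional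
`Φ_M(h) = |M∇h|²/h`, pointwise
`(1/2)L(|M∇h|²/h) − (M∇h)·M∇(Lh)/h + |M∇h|²Lh/(2h²) ≥ (M∇h)·([L,M∇]h)/h`. -/
theorem stmt5 {n k : ℕ} (b : (Fin n → ℝ) → Fin n → ℝ)
    (hb : ∀ i, ContDiff ℝ (⊤ : ℕ∞) fun x => b x i)
    (B : (Fin n → ℝ) → Matrix (Fin n) (Fin n) ℝ)
    (hBsmooth : ∀ i j, ContDiff ℝ (⊤ : ℕ∞) fun x => B x i j)
    (hBpsd : ∀ x, (B x).PosSemidef)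
    (M : Matrix (Fin k) (Fin n) ℝ)
    (h : (Fin n → ℝ) → ℝ) (hh : ContDiff ℝ (⊤ : ℕ∞) h)
    (hpos : ∀ x, 0 < h x) (x : Fin n → ℝ) :
    (1 / 2) * diffOpV b B (fun z => (∑ i, (Mgrad M h z i) ^ 2) / h z) x
        - (∑ i, Mgrad M h x i * Mgrad M (diffOpV b B h) x i) / h x
        + (∑ i, (Mgrad M h x i) ^ 2) * diffOpV b B h x / (2 * (h x) ^ 2)
      ≥ (∑ i, Mgrad M h x i
            * (diffOpV b B (fun z => Mgrad M h z i) x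
                - Mgrad M (diffOpV b B h) x i)) / h x := by
  have hh' : ContDiffAt ℝ 3 h x := (contDiff_infty.1 hh 3).contDiffAt
  have key := stmt5_general b (fun i j => (hBsmooth i j).differentiable (by simp) x) (hBpsd x)
    (hh'.of_le (by norm_num)) (hpos x) (contDiffAt_Mgrad M hh' (by norm_num))
  simp only [mul_sub, Finset.sum_sub_distrib, sub_div]
  linarith
end
end

section
/- Let d ∈ ℕ and let U : ℝ^d → ℝ be a smooth function with U ≥ 0 such that, for some constants a₁, a₂, M, r > 0, a₁|x|² − M ≤ U(x) ≤ a₂|x|² + M and ∇U(x)·x ≥ r|x|² − M for all x. Let ε₀ > 0, l > 0, and let σ : (0, ε₀] → (0,∞) be smooth with σ(ε) ≥ lε and with both σ and its derivative ∂_εσ sub-exponential. For ε ∈ (0, ε₀] define δ(ε) by δ(ε)^{-1} = 4(1 + 1/√(a₁ l))(1 + ε/(2 r σ(ε)³)) and R_ε(x,y) = (σ(ε)/ε) U(x) + |y|²/2 + δ(ε) x·y. Then for every p ∈ ℕ there exists a sub-exponential function C_p : (0, ε₀] → (0,∞) such that for all ε ∈ (0, ε₀] and all (x,y) ∈ ℝ^d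 × ℝ^d, ∂_ε (R_ε(x,y)^p) ≤ C_p(ε) (|R_ε(x,y)|^p + 1). -/
noncomputable section

open scoped BigOperators Topology
open Filter

/-- The coefficient δ(ε), defined by δ(ε)⁻¹ = 4(1 + 1/√(a₁l))(1 + ε/(2rσ(ε)³)). -/
def deltaFn (a₁ l r : ℝ) (σ : ℝ → ℝ) (ε : ℝ) : ℝ :=
  (4 * (1 + 1 / Real.sqrt (a₁ * l)) * (1 + ε / (2 * r * (σ ε) ^ 3)))⁻¹

/-- The Lyapunov function R_ε(x,y) = (σ(ε)/ε)U(x) + |y|²/2 + δ(ε) x·y. -/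
def RFn {d : ℕ} (U : (Fin d → ℝ) → ℝ) (a₁ l r : ℝ) (σ : ℝ → ℝ) (ε : ℝ)
    (x y : Fin d → ℝ) : ℝ :=
  (σ ε / ε) * U x + (∑ i, (y i) ^ 2) / 2 + deltaFn a₁ l r σ ε * ∑ i, x i * y i

/-! Put `V = U + M`, so that `a₁|x|² ≤ V`. As `16 δ² ≤ a₁ l` and `l ≤ σ/ε`, Young's inequality
absorbs the cross term `δ x·y`, and `l V + |y|² ≤ 4 (R_ε + M σ/ε)`. Hence `|U|` and `|x·y|` are at
most a sub-exponential factor times `|R_ε| + 1`. The derivative `∂_ε R_ε = (σ/ε)' U + δ' x·y` has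
sub-exponential coefficients: they are polynomials in `ε`, `ε⁻¹`, `σ`, `σ⁻¹`, `σ'` and the bounded
function `δ`, and `σ⁻¹ ≤ (l ε)⁻¹`. So `|∂_ε R_ε| ≤ B(ε) (|R_ε| + 1)`, and the chain rule gives the
bound for every power. -/

lemma tendsto_id_nhdsWithin {α : Type*} [TopologicalSpace α] (a : α) (s : Set α) :
    Tendsto (fun x => x) (𝓝[s] a) (𝓝 a) :=
  nhdsWithin_le_nhds

/-- A real function is sub-exponential (as `ε → 0⁺`) if `ε log (1 + |f ε|) → 0`. Only growth is
restricted: functions that decay fast at `0` are sub-exponential in this sense. -/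
def IsSubexponential (f : ℝ → ℝ) : Prop :=
  Tendsto (fun ε => ε * Real.log (1 + |f ε|)) (𝓝[>] 0) (𝓝 0)

namespace IsSubexponential

variable {f g : ℝ → ℝ}

lemma eventually_nonneg (f : ℝ → ℝ) : ∀ᶠ ε in 𝓝[>] 0, 0 ≤ ε * Real.log (1 + |f ε|) := by
  filter_upwards [self_mem_nhdsWithin] with ε hε
  exact mul_nonneg (le_of_lt hε) (Real.log_nonneg (le_add_of_nonneg_right (abs_nonneg _)))

lemma mono (hg : IsSubexponential g) (h : ∀ᶠ ε in 𝓝[>] 0, |f ε| ≤ |g ε|) :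
    IsSubexponential f := by
  refine squeeze_zero' (eventually_nonneg f) ?_ hg
  filter_upwards [self_mem_nhdsWithin, h] with ε hε hfg
  have hε' : (0 : ℝ) ≤ ε := le_of_lt hε
  gcongr

lemma of_one_add_abs_le_mul {h : ℝ → ℝ} (hf : IsSubexponential f) (hg : IsSubexponential g)
    (hle : ∀ ε, 1 + |h ε| ≤ (1 + |f ε|) * (1 + |g ε|)) : IsSubexponential h := by
  refine squeeze_zero' (eventually_nonneg h) ?_ (by simpa only [add_zero] using Tendsto.add hf hg)
  filter_upwards [self_mem_nhdsWithin] with ε hε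
  rw [← mul_add, ← Real.log_mul (by positivity) (by positivity)]
  exact mul_le_mul_of_nonneg_left (Real.log_le_log (by positivity) (hle ε)) (le_of_lt hε)

lemma mul (hf : IsSubexponential f) (hg : IsSubexponential g) :
    IsSubexponential fun ε => f ε * g ε :=
  hf.of_one_add_abs_le_mul hg fun ε => by
    rw [abs_mul]
    nlinarith [abs_nonneg (f ε), abs_nonneg (g ε)]

lemma add (hf : IsSubexponential f) (hg : IsSubexponential g) :
    IsSubexponential fun ε => f ε + g ε :=
  hf.of_one_add_abs_le_mul hg fun ε => by
    nlinarith [abs_add_le (f ε) (g ε), mul_nonneg (abs_nonneg (f ε)) (abs_nonneg (g ε))]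

protected lemma abs (hf : IsSubexponential f) : IsSubexponential fun ε => |f ε| := by
  simpa only [IsSubexponential, abs_abs] using hf

lemma sub (hf : IsSubexponential f) (hg : IsSubexponential g) :
    IsSubexponential fun ε => f ε - g ε := by
  have hneg : IsSubexponential fun ε => -g ε := by simpa only [IsSubexponential, abs_neg] using hg
  simpa only [sub_eq_add_neg] using hf.add hneg

lemma of_tendsto {a : ℝ} (h : Tendsto f (𝓝[>] 0) (𝓝 a)) : IsSubexponential f := by
  have hlog : Tendsto (fun ε => Real.log (1 + |f ε|)) (𝓝[>] 0) (𝓝 (Real.log (1 + |a|))) :=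
    (h.abs.const_add 1).log (by positivity)
  simpa only [IsSubexponential, zero_mul] using (tendsto_id_nhdsWithin 0 _).mul hlog

lemma const (c : ℝ) : IsSubexponential fun _ => c :=
  of_tendsto tendsto_const_nhds

protected lemma id : IsSubexponential fun ε => ε :=
  of_tendsto (tendsto_id_nhdsWithin 0 _)

lemma pow (hf : IsSubexponential f) (n : ℕ) : IsSubexponential fun ε => f ε ^ n := by
  induction n with
  | zero => simpa only [pow_zero] using const 1
  | succ n ih => simpa only [pow_succ] using ih.mul hf

lemma of_tendsto_mul_log (hpos : ∀ᶠ ε in 𝓝[>] 0, 0 < f ε)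
    (h : Tendsto (fun ε => ε * Real.log (f ε)) (𝓝[>] 0) (𝓝 0)) : IsSubexponential f := by
  have hlim : Tendsto (fun ε => ε * Real.log 2 + |ε * Real.log (f ε)|) (𝓝[>] 0) (𝓝 0) := by
    simpa only [zero_mul, abs_zero, add_zero] using
      ((tendsto_id_nhdsWithin 0 _).mul_const (Real.log 2)).add h.abs
  refine squeeze_zero' (eventually_nonneg f) ?_ hlim
  filter_upwards [self_mem_nhdsWithin, hpos] with ε hε hf
  rw [abs_mul, abs_of_pos (Set.mem_Ioi.mp hε), ← mul_add, abs_of_pos hf]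
  refine mul_le_mul_of_nonneg_left ?_ (le_of_lt hε)
  rcases le_total (f ε) 1 with hle | hge
  · calc Real.log (1 + f ε) ≤ Real.log 2 := Real.log_le_log (by linarith) (by linarith)
      _ ≤ Real.log 2 + |Real.log (f ε)| := le_add_of_nonneg_right (abs_nonneg _)
  · calc Real.log (1 + f ε) ≤ Real.log (2 * f ε) := Real.log_le_log (by linarith) (by linarith)
      _ = Real.log 2 + Real.log (f ε) := Real.log_mul two_ne_zero hf.ne'
      _ ≤ Real.log 2 + |Real.log (f ε)| := by gcongr; exact le_abs_self _

lemma inv_id : IsSubexponential fun ε => ε⁻¹ := by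
  refine of_tendsto_mul_log (eventually_mem_nhdsWithin.mono fun ε hε => inv_pos.mpr hε) ?_
  have h := (Real.continuous_mul_log.tendsto 0).neg
  simp only [zero_mul, neg_zero] at h
  simpa only [Real.log_inv, mul_neg] using tendsto_nhdsWithin_of_tendsto_nhds h

lemma inv_of_mul_le {c : ℝ} (hc : 0 < c) (h : ∀ᶠ ε in 𝓝[>] 0, c * ε ≤ f ε) :
    IsSubexponential fun ε => (f ε)⁻¹ := by
  refine ((const c⁻¹).mul inv_id).mono ?_
  filter_upwards [self_mem_nhdsWithin, h] with ε hε hf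
  have hcε : 0 < c * ε := mul_pos hc hε
  rw [← mul_inv, abs_inv, abs_inv]
  exact inv_anti₀ (abs_pos_of_pos hcε) (abs_le_abs_of_nonneg hcε.le hf)

end IsSubexponential

lemma pow_mul_add_one_le {R : Type*} [CommRing R] [LinearOrder R] [IsStrictOrderedRing R] {u : R}
    (hu : 0 ≤ u) (n : ℕ) : u ^ n * (u + 1) ≤ 2 * (u ^ (n + 1) + 1) := by
  have hpow : u ^ n ≤ u ^ (n + 1) + 1 := by
    rcases le_total u 1 with h | h
    · exact (pow_le_one₀ hu h).trans (le_add_of_nonneg_left (pow_nonneg hu _))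
    · exact (pow_le_pow_right₀ h n.le_succ).trans (le_add_of_nonneg_right zero_le_one)
  linarith [pow_succ u n]

lemma abs_deriv_pow_le {f : ℝ → ℝ} {t B : ℝ} (hf : DifferentiableAt ℝ f t)
    (hB : |deriv f t| ≤ B * (|f t| + 1)) (p : ℕ) :
    |deriv (fun s => f s ^ p) t| ≤ 2 * p * B * (|f t| ^ p + 1) := by
  have hB₀ : 0 ≤ B := nonneg_of_mul_nonneg_left ((abs_nonneg _).trans hB) (by positivity)
  rw [(hf.hasDerivAt.fun_pow p).deriv]
  rcases p with _ | n
  · simp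
  · rw [Nat.add_sub_cancel, abs_mul, abs_mul, abs_pow, Nat.abs_cast]
    calc ((n + 1 : ℕ) : ℝ) * |f t| ^ n * |deriv f t|
        ≤ ((n + 1 : ℕ) : ℝ) * |f t| ^ n * (B * (|f t| + 1)) := by gcongr
      _ = ((n + 1 : ℕ) : ℝ) * B * (|f t| ^ n * (|f t| + 1)) := by ring
      _ ≤ ((n + 1 : ℕ) : ℝ) * B * (2 * (|f t| ^ (n + 1) + 1)) :=
        mul_le_mul_of_nonneg_left (pow_mul_add_one_le (abs_nonneg _) n) (by positivity)
      _ = 2 * ((n + 1 : ℕ) : ℝ) * B * (|f t| ^ (n + 1) + 1) := by ring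

lemma abs_sum_mul_le_half_add_sum_sq {ι R : Type*} [Field R] [LinearOrder R]
    [IsStrictOrderedRing R] (s : Finset ι) (f g : ι → R) :
    |∑ i ∈ s, f i * g i| ≤ (∑ i ∈ s, f i ^ 2 + ∑ i ∈ s, g i ^ 2) / 2 := by
  rw [← Finset.sum_add_distrib, Finset.sum_div]
  refine (Finset.abs_sum_le_sum_abs _ _).trans (Finset.sum_le_sum fun i _ => ?_)
  rw [abs_mul, ← sq_abs (f i), ← sq_abs (g i), le_div_iff₀ two_pos]
  linarith [two_mul_le_add_sq |f i| |g i|]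

section Delta

variable {a₁ l r ε : ℝ} {σ : ℝ → ℝ}

lemma deltaFn_nonneg (hr : 0 ≤ r) (hε : 0 ≤ ε) (hσ : 0 ≤ σ ε) : 0 ≤ deltaFn a₁ l r σ ε := by
  unfold deltaFn
  positivity

lemma four_mul_deltaFn_le_sqrt (hal : 0 < a₁ * l) (hr : 0 ≤ r) (hε : 0 ≤ ε) (hσ : 0 ≤ σ ε) :
    4 * deltaFn a₁ l r σ ε ≤ √(a₁ * l) := by
  have hs : 0 < √(a₁ * l) := Real.sqrt_pos.mpr hal
  have hg : 0 ≤ ε / (2 * r * σ ε ^ 3) := by positivity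
  have hle : 4 * (1 / √(a₁ * l)) ≤ 4 * (1 + 1 / √(a₁ * l)) * (1 + ε / (2 * r * σ ε ^ 3)) :=
    calc 4 * (1 / √(a₁ * l)) ≤ 4 * (1 + 1 / √(a₁ * l)) := by linarith
      _ ≤ _ := le_mul_of_one_le_right (by positivity) (by linarith)
  calc 4 * deltaFn a₁ l r σ ε ≤ 4 * (4 * (1 / √(a₁ * l)))⁻¹ := by unfold deltaFn; gcongr
    _ = √(a₁ * l) := by field_simp [hs.ne']

lemma hasDerivAt_deltaFn (hr : 0 < r) (hε : 0 < ε) (hσ : 0 < σ ε)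
    (hσd : DifferentiableAt ℝ σ ε) :
    HasDerivAt (deltaFn a₁ l r σ)
      (-(4 * (1 + 1 / √(a₁ * l))) * deltaFn a₁ l r σ ε ^ 2 *
        ((2 * r)⁻¹ * ((σ ε)⁻¹ ^ 3 - 3 * ε * deriv σ ε * (σ ε)⁻¹ ^ 4))) ε := by
  have hquot := (hasDerivAt_id ε).fun_div ((hσd.hasDerivAt.fun_pow 3).const_mul (2 * r))
    (by positivity)
  have hδ := ((hquot.const_add 1).const_mul (4 * (1 + 1 / √(a₁ * l)))).fun_inv
    (by simp only [id]; positivity)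
  refine hδ.congr_deriv ?_
  simp only [deltaFn, id]
  field_simp
  push_cast
  ring

lemma isSubexponential_deltaFn (hal : 0 < a₁ * l) (hr : 0 ≤ r)
    (hσ : ∀ᶠ ε in 𝓝[>] 0, 0 ≤ σ ε) : IsSubexponential (deltaFn a₁ l r σ) := by
  refine (IsSubexponential.const √(a₁ * l)).mono ?_
  filter_upwards [self_mem_nhdsWithin, hσ] with ε hε hσε
  have hδ := deltaFn_nonneg (a₁ := a₁) (l := l) hr (le_of_lt hε) hσε
  rw [abs_of_nonneg hδ, abs_of_nonneg (Real.sqrt_nonneg _)]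
  linarith [four_mul_deltaFn_le_sqrt hal hr (le_of_lt hε) hσε]

lemma isSubexponential_deriv_deltaFn (ha₁ : 0 < a₁) (hl : 0 < l) (hr : 0 < r)
    (hσd : ∀ᶠ ε in 𝓝[>] 0, DifferentiableAt ℝ σ ε) (hσl : ∀ᶠ ε in 𝓝[>] 0, l * ε ≤ σ ε)
    (hσ' : IsSubexponential (deriv σ)) : IsSubexponential (deriv (deltaFn a₁ l r σ)) := by
  have hσpos : ∀ᶠ ε in 𝓝[>] 0, 0 < σ ε := by
    filter_upwards [self_mem_nhdsWithin, hσl] with ε hε h using (mul_pos hl hε).trans_le h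
  have hδ := isSubexponential_deltaFn (mul_pos ha₁ hl) hr.le (hσpos.mono fun _ h => h.le)
  have hinv := IsSubexponential.inv_of_mul_le hl hσl
  refine (((IsSubexponential.const (-(4 * (1 + 1 / √(a₁ * l))))).mul (hδ.pow 2)).mul
    ((IsSubexponential.const (2 * r)⁻¹).mul ((hinv.pow 3).sub
      ((((IsSubexponential.const 3).mul .id).mul hσ').mul (hinv.pow 4))))).mono ?_
  filter_upwards [self_mem_nhdsWithin, hσpos, hσd] with ε hε hpos hd
  rw [(hasDerivAt_deltaFn hr hε hpos hd).deriv]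

end Delta

section Lyapunov

variable {d : ℕ} {U : (Fin d → ℝ) → ℝ} {a₁ M r l ε : ℝ} {σ : ℝ → ℝ}

lemma mul_add_sum_sq_le_RFn {x : Fin d → ℝ} (ha₁ : 0 < a₁) (hr : 0 ≤ r) (hl : 0 < l) (hε : 0 < ε)
    (hU : a₁ * ∑ i, x i ^ 2 - M ≤ U x) (hσ : l * ε ≤ σ ε) (y : Fin d → ℝ) :
    l * (U x + M) + ∑ i, y i ^ 2 ≤ 4 * (RFn U a₁ l r σ ε x y + M * (σ ε / ε)) := by
  have hσ₀ : 0 ≤ σ ε := (mul_pos hl hε).le.trans hσ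
  have hal : 0 < a₁ * l := mul_pos ha₁ hl
  have hX : 0 ≤ ∑ i, x i ^ 2 := by positivity
  have hY : 0 ≤ ∑ i, y i ^ 2 := by positivity
  have hV : a₁ * ∑ i, x i ^ 2 ≤ U x + M := by linarith
  have hV₀ : 0 ≤ U x + M := (mul_nonneg ha₁.le hX).trans hV
  have hlV : 0 ≤ l * (U x + M) := mul_nonneg hl.le hV₀
  have hscale : l * (U x + M) ≤ σ ε / ε * (U x + M) :=
    mul_le_mul_of_nonneg_right ((le_div_iff₀ hε).mpr hσ) hV₀
  have hδ₀ : 0 ≤ 4 * deltaFn a₁ l r σ ε := mul_nonneg zero_le_four (deltaFn_nonneg hr hε.le hσ₀)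
  have hδ : (4 * deltaFn a₁ l r σ ε) ^ 2 ≤ a₁ * l :=
    (pow_le_pow_left₀ hδ₀ (four_mul_deltaFn_le_sqrt hal hr hε.le hσ₀) 2).trans_eq
      (Real.sq_sqrt hal.le)
  have hcross : -(l * (U x + M) + ∑ i, y i ^ 2) / 2 ≤
      4 * deltaFn a₁ l r σ ε * ∑ i, x i * y i := by
    have hyoung := neg_le_of_abs_le (abs_sum_mul_le_half_add_sum_sq Finset.univ
      (fun i => 4 * deltaFn a₁ l r σ ε * x i) y)
    simp only [mul_pow _ (x _), mul_assoc _ (x _), ← Finset.mul_sum] at hyoung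
    have hδX : (4 * deltaFn a₁ l r σ ε) ^ 2 * ∑ i, x i ^ 2 ≤ l * (U x + M) :=
      calc _ ≤ a₁ * l * ∑ i, x i ^ 2 := by gcongr
        _ = l * (a₁ * ∑ i, x i ^ 2) := by ring
        _ ≤ l * (U x + M) := by gcongr
    linarith
  unfold RFn
  linarith

lemma mul_add_sum_sq_le_abs_RFn {x : Fin d → ℝ} (ha₁ : 0 < a₁) (hr : 0 ≤ r) (hl : 0 < l)
    (hε : 0 < ε) (hU : a₁ * ∑ i, x i ^ 2 - M ≤ U x) (hσ : l * ε ≤ σ ε) (y : Fin d → ℝ) :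
    l * (U x + M) + ∑ i, y i ^ 2 ≤
      4 * ((1 + |M * (σ ε / ε)|) * (|RFn U a₁ l r σ ε x y| + 1)) := by
  refine (mul_add_sum_sq_le_RFn ha₁ hr hl hε hU hσ y).trans
    (mul_le_mul_of_nonneg_left ?_ zero_le_four)
  calc _ ≤ |RFn U a₁ l r σ ε x y| + |M * (σ ε / ε)| := add_le_add (le_abs_self _) (le_abs_self _)
    _ ≤ (1 + |M * (σ ε / ε)|) * (|RFn U a₁ l r σ ε x y| + 1) := by
      linarith [mul_nonneg (abs_nonneg (M * (σ ε / ε))) (abs_nonneg (RFn U a₁ l r σ ε x y))]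

lemma abs_apply_le_abs_RFn {x : Fin d → ℝ} (ha₁ : 0 < a₁) (hr : 0 ≤ r) (hl : 0 < l) (hε : 0 < ε)
    (hU : a₁ * ∑ i, x i ^ 2 - M ≤ U x) (hσ : l * ε ≤ σ ε) (y : Fin d → ℝ) :
    |U x| ≤ (4 / l + |M|) * ((1 + |M * (σ ε / ε)|) * (|RFn U a₁ l r σ ε x y| + 1)) := by
  set N := (1 + |M * (σ ε / ε)|) * (|RFn U a₁ l r σ ε x y| + 1)
  have hN : 1 ≤ N := one_le_mul_of_one_le_of_one_le
    (le_add_of_nonneg_right (abs_nonneg _)) (le_add_of_nonneg_left (abs_nonneg _))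
  have hX : 0 ≤ a₁ * ∑ i, x i ^ 2 := by positivity
  have hY : 0 ≤ ∑ i, y i ^ 2 := by positivity
  have hV : U x + M ≤ 4 / l * N := by
    rw [div_mul_eq_mul_div, le_div_iff₀' hl]
    linarith [mul_add_sum_sq_le_abs_RFn ha₁ hr hl hε hU hσ y]
  calc |U x| = |(U x + M) - M| := by rw [add_sub_cancel_right]
    _ ≤ |U x + M| + |M| := abs_sub _ _
    _ = (U x + M) + |M| := by rw [abs_of_nonneg (by linarith : 0 ≤ U x + M)]
    _ ≤ 4 / l * N + |M| * N := add_le_add hV (le_mul_of_one_le_right (abs_nonneg M) hN)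
    _ = (4 / l + |M|) * N := by ring

lemma abs_sum_mul_le_abs_RFn {x : Fin d → ℝ} (ha₁ : 0 < a₁) (hr : 0 ≤ r) (hl : 0 < l) (hε : 0 < ε)
    (hU : a₁ * ∑ i, x i ^ 2 - M ≤ U x) (hσ : l * ε ≤ σ ε) (y : Fin d → ℝ) :
    |∑ i, x i * y i| ≤
      (2 / (a₁ * l) + 2) * ((1 + |M * (σ ε / ε)|) * (|RFn U a₁ l r σ ε x y| + 1)) := by
  have hcoercive := mul_add_sum_sq_le_abs_RFn ha₁ hr hl hε hU hσ y
  set N := (1 + |M * (σ ε / ε)|) * (|RFn U a₁ l r σ ε x y| + 1)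
  have hlX : l * (a₁ * ∑ i, x i ^ 2) ≤ l * (U x + M) :=
    mul_le_mul_of_nonneg_left (by linarith) hl.le
  have hX₀ : 0 ≤ l * (a₁ * ∑ i, x i ^ 2) := by positivity
  have hY₀ : 0 ≤ ∑ i, y i ^ 2 := by positivity
  have hX : ∑ i, x i ^ 2 ≤ 4 / (a₁ * l) * N := by
    rw [div_mul_eq_mul_div, le_div_iff₀' (mul_pos ha₁ hl)]
    linarith
  calc |∑ i, x i * y i| ≤ (∑ i, x i ^ 2 + ∑ i, y i ^ 2) / 2 :=
        abs_sum_mul_le_half_add_sum_sq _ x y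
    _ ≤ (4 / (a₁ * l) * N + 4 * N) / 2 := by gcongr; linarith
    _ = (2 / (a₁ * l) + 2) * N := by ring

lemma hasDerivAt_RFn (hr : 0 < r) (hε : 0 < ε) (hσ : 0 < σ ε) (hσd : DifferentiableAt ℝ σ ε)
    (x y : Fin d → ℝ) :
    HasDerivAt (fun e => RFn U a₁ l r σ e x y)
      ((deriv σ ε * ε⁻¹ - σ ε * ε⁻¹ ^ 2) * U x +
        deriv (deltaFn a₁ l r σ) ε * ∑ i, x i * y i) ε := by
  have hscale : HasDerivAt (fun e => σ e / e) (deriv σ ε * ε⁻¹ - σ ε * ε⁻¹ ^ 2) ε :=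
    (hσd.hasDerivAt.fun_div (hasDerivAt_id' ε) hε.ne').congr_deriv (by field_simp)
  have hδ := (hasDerivAt_deltaFn (a₁ := a₁) (l := l) hr hε hσ hσd).differentiableAt.hasDerivAt
  exact ((hscale.mul_const (U x)).add_const _).add (hδ.mul_const _)

lemma exists_isSubexponential_abs_deriv_RFn_le {ε₀ : ℝ} (hε₀ : 0 < ε₀) (ha₁ : 0 < a₁) (hr : 0 < r)
    (hl : 0 < l) (hU : ∀ x, a₁ * ∑ i, x i ^ 2 - M ≤ U x)
    (hσd : ∀ ε ∈ Set.Ioc 0 ε₀, DifferentiableAt ℝ σ ε)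
    (hσl : ∀ ε ∈ Set.Ioc 0 ε₀, l * ε ≤ σ ε)
    (hσ : IsSubexponential σ) (hσ' : IsSubexponential (deriv σ)) :
    ∃ B : ℝ → ℝ, IsSubexponential B ∧ ∀ ε ∈ Set.Ioc 0 ε₀, ∀ x y : Fin d → ℝ,
      |deriv (fun e => RFn U a₁ l r σ e x y) ε| ≤ B ε * (|RFn U a₁ l r σ ε x y| + 1) := by
  have hIoc : ∀ᶠ ε in 𝓝[>] 0, ε ∈ Set.Ioc 0 ε₀ := Ioc_mem_nhdsGT hε₀
  have hδ' : IsSubexponential (deriv (deltaFn a₁ l r σ)) :=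
    isSubexponential_deriv_deltaFn ha₁ hl hr (hIoc.mono hσd) (hIoc.mono hσl) hσ'
  have hscale' : IsSubexponential fun ε => deriv σ ε * ε⁻¹ - σ ε * ε⁻¹ ^ 2 :=
    (hσ'.mul .inv_id).sub (hσ.mul (IsSubexponential.inv_id.pow 2))
  have hM : IsSubexponential fun ε => 1 + |M * (σ ε / ε)| := by
    simpa only [div_eq_mul_inv] using
      (IsSubexponential.const 1).add ((IsSubexponential.const M).mul (hσ.mul .inv_id)).abs
  refine ⟨_, ((hscale'.abs.mul (.const (4 / l + |M|))).add
    (hδ'.abs.mul (.const (2 / (a₁ * l) + 2)))).mul hM, fun ε hε x y => ?_⟩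
  have hσε : 0 < σ ε := (mul_pos hl hε.1).trans_le (hσl ε hε)
  rw [(hasDerivAt_RFn hr hε.1 hσε (hσd ε hε) x y).deriv]
  calc _ ≤ |deriv σ ε * ε⁻¹ - σ ε * ε⁻¹ ^ 2| * |U x| +
          |deriv (deltaFn a₁ l r σ) ε| * |∑ i, x i * y i| := by
        simpa only [abs_mul] using abs_add_le (_ * U x) (_ * ∑ i, x i * y i)
    _ ≤ _ := add_le_add
        (mul_le_mul_of_nonneg_left
          (abs_apply_le_abs_RFn ha₁ hr.le hl hε.1 (hU x) (hσl ε hε) y) (abs_nonneg _))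
        (mul_le_mul_of_nonneg_left
          (abs_sum_mul_le_abs_RFn ha₁ hr.le hl hε.1 (hU x) (hσl ε hε) y) (abs_nonneg _))
    _ = _ := by ring

end Lyapunov

theorem stmt10_general {d : ℕ} (U : (Fin d → ℝ) → ℝ) (a₁ M r : ℝ) (ha₁ : 0 < a₁) (hr : 0 < r)
    (hUlow : ∀ x, a₁ * (∑ i, x i ^ 2) - M ≤ U x) (ε₀ l : ℝ) (hε₀ : 0 < ε₀) (hl : 0 < l)
    (σ : ℝ → ℝ) (hσd : ∀ ε ∈ Set.Ioc 0 ε₀, DifferentiableAt ℝ σ ε)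
    (hσl : ∀ ε ∈ Set.Ioc 0 ε₀, l * ε ≤ σ ε)
    (hσ : Tendsto (fun ε => ε * Real.log (σ ε)) (𝓝[>] 0) (𝓝 0))
    (hσ' : Tendsto (fun ε => ε * Real.log (1 + |deriv σ ε|)) (𝓝[>] 0) (𝓝 0)) (p : ℕ) :
    ∃ C : ℝ → ℝ, (∀ ε, 0 < C ε) ∧
      Tendsto (fun ε => ε * Real.log (C ε)) (𝓝[>] 0) (𝓝 0) ∧
      ∀ ε ∈ Set.Ioc 0 ε₀, ∀ x y : Fin d → ℝ,
        |deriv (fun e => RFn U a₁ l r σ e x y ^ p) ε|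
          ≤ C ε * (|RFn U a₁ l r σ ε x y| ^ p + 1) := by
  have hσpos : ∀ ε ∈ Set.Ioc 0 ε₀, 0 < σ ε := fun ε hε =>
    (mul_pos hl hε.1).trans_le (hσl ε hε)
  have hσsub : IsSubexponential σ :=
    .of_tendsto_mul_log (eventually_of_mem (Ioc_mem_nhdsGT hε₀) hσpos) hσ
  obtain ⟨B, hBsub, hB⟩ :=
    exists_isSubexponential_abs_deriv_RFn_le hε₀ ha₁ hr hl hUlow hσd hσl hσsub hσ'
  refine ⟨fun ε => 1 + |2 * p * B ε|, fun ε => by positivity,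
    (IsSubexponential.const (2 * p)).mul hBsub, fun ε hε x y => ?_⟩
  have hR := (hasDerivAt_RFn (U := U) (a₁ := a₁) (l := l) hr hε.1 (hσpos ε hε) (hσd ε hε)
    x y).differentiableAt
  refine (abs_deriv_pow_le hR (hB ε hε x y) p).trans ?_
  gcongr
  exact (le_abs_self _).trans (le_add_of_nonneg_left zero_le_one)

/-- For every p ∈ ℕ there is a sub-exponential function C_p with
∂_ε(R_ε(x,y)^p) ≤ C_p(ε)(|R_ε(x,y)|^p + 1). -/
theorem stmt10 {d : ℕ} (U : (Fin d → ℝ) → ℝ) (hU : ContDiff ℝ (⊤ : ℕ∞) U)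
    (hU0 : ∀ x, 0 ≤ U x)
    (a₁ a₂ Mc r : ℝ) (ha₁ : 0 < a₁) (ha₂ : 0 < a₂) (hMc : 0 < Mc) (hr : 0 < r)
    (hUlow : ∀ x, a₁ * (∑ i, (x i) ^ 2) - Mc ≤ U x)
    (hUup : ∀ x, U x ≤ a₂ * (∑ i, (x i) ^ 2) + Mc)
    (hUgrad : ∀ x, r * (∑ i, (x i) ^ 2) - Mc ≤ ∑ i, gradU U i x * x i)
    (ε₀ l : ℝ) (hε₀ : 0 < ε₀) (hl : 0 < l)
    (σ : ℝ → ℝ) (hσsmooth : ContDiffOn ℝ (⊤ : ℕ∞) σ (Set.Ioi (0 : ℝ)))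
    (hσpos : ∀ ε ∈ Set.Ioc (0 : ℝ) ε₀, 0 < σ ε)
    (hσl : ∀ ε ∈ Set.Ioc (0 : ℝ) ε₀, l * ε ≤ σ ε)
    (hσsub : Tendsto (fun ε => ε * Real.log (σ ε)) (𝓝[>] (0 : ℝ)) (𝓝 0))
    (hσ'sub : Tendsto (fun ε => ε * Real.log (1 + |deriv σ ε|)) (𝓝[>] (0 : ℝ)) (𝓝 0))
    (p : ℕ) :
    ∃ C : ℝ → ℝ, (∀ ε ∈ Set.Ioc (0 : ℝ) ε₀, 0 < C ε) ∧
      Tendsto (fun ε => ε * Real.log (C ε)) (𝓝[>] (0 : ℝ)) (𝓝 0) ∧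
      ∀ ε ∈ Set.Ioc (0 : ℝ) ε₀, ∀ x y : Fin d → ℝ,
        deriv (fun e => (RFn U a₁ l r σ e x y) ^ p) ε
          ≤ C ε * (|RFn U a₁ l r σ ε x y| ^ p + 1) := by
  obtain ⟨C, hCpos, hCsub, hC⟩ := stmt10_general U a₁ Mc r ha₁ hr hUlow ε₀ l hε₀ hl σ
    (fun ε hε => (hσsmooth.differentiableOn (by simp)).differentiableAt (Ioi_mem_nhds hε.1))
    hσl hσsub hσ'sub p
  exact ⟨C, fun ε _ => hCpos ε, hCsub, fun ε hε x y => (le_abs_self _).trans (hC ε hε x y)⟩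
end
end

section
/- Let w : (0,∞) → (0,∞) be sub-exponential, i.e. ε ln w(ε) → 0 as ε → 0⁺. Let (ε_t)_{t ≥ 1} be positive with ε_t → 0 as t → ∞ and with liminf_{t→∞} ε_t ln t > 0. Then for every α > 0, t^{−α} w(ε_t) → 0 as t → ∞. -/
open scoped Topology
open Filter
open Asymptotics

/-!
Since `ε_t ln w(ε_t) → 0` while `ε_t ln t` stays bounded away from `0`, cancelling `ε_t` gives
`ln w(ε_t) = o(ln t)`. A function whose logarithm is negligible against `ln t` is negligible
against every positive power of `t`.
-/

theorem isLittleO_of_tendsto_smul_zero {ι 𝕜 E F : Type*} [NormedField 𝕜]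
    [SeminormedAddCommGroup E] [NormedSpace 𝕜 E] [SeminormedAddCommGroup F] [NormedSpace 𝕜 F]
    {l : Filter ι} {a : ι → 𝕜} {u : ι → E} {v : ι → F} {c : ℝ} (hc : 0 < c)
    (hu : Tendsto (fun i => a i • u i) l (𝓝 0)) (hv : ∀ᶠ i in l, c ≤ ‖a i • v i‖) :
    u =o[l] v := by
  have hone : (fun _ => (1 : ℝ)) =O[l] fun i => a i • v i :=
    .of_bound c⁻¹ <| hv.mono fun i hi => by
      rwa [norm_one, ← div_eq_inv_mul, one_le_div₀ hc]
  have hsmul : (fun i => a i • u i) =o[l] fun i => a i • v i :=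
    ((isLittleO_one_iff ℝ).2 hu).trans_isBigO hone
  have ha : ∀ᶠ i in l, a i ≠ 0 := hv.mono fun i hi h0 => by
    rw [h0, zero_smul, norm_zero] at hi
    exact hc.not_ge hi
  exact ((isBigO_refl (fun i => (a i)⁻¹) l).smul_isLittleO hsmul).congr'
    (ha.mono fun i hi => inv_smul_smul₀ hi (u i)) (ha.mono fun i hi => inv_smul_smul₀ hi (v i))

theorem isLittleO_rpow_of_log_isLittleO_log {ι E : Type*} [SeminormedAddCommGroup E]
    {l : Filter ι} {f : ι → E} {g : ι → ℝ} {α : ℝ} (hα : 0 < α) (hg : Tendsto g l atTop)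
    (h : (fun i => Real.log ‖f i‖) =o[l] fun i => Real.log (g i)) :
    f =o[l] fun i => g i ^ α := by
  have hlog : Tendsto (fun i => α * Real.log (g i)) l atTop :=
    (Real.tendsto_log_atTop.comp hg).const_mul_atTop hα
  have hnegl : (fun i => Real.log ‖f i‖) =o[l] fun i => α * Real.log (g i) :=
    h.const_mul_right hα.ne'
  have hdiff : Tendsto (fun i => α * Real.log (g i) - Real.log ‖f i‖) l atTop :=
    (IsEquivalent.refl.sub_isLittleO hnegl).symm.tendsto_atTop hlog
  have hexp : f =O[l] fun i => Real.exp (Real.log ‖f i‖) :=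
    .of_norm_le fun i => Real.le_exp_log ‖f i‖
  exact (hexp.trans_isLittleO (Real.isLittleO_exp_comp_exp_comp.2 hdiff)).congr' .rfl <|
    (hg.eventually_gt_atTop 0).mono fun i hi => by
      simp only [Real.rpow_def_of_pos hi, mul_comm α]

theorem stmt12_general {ι : Type*} {l : Filter ι} {w : ℝ → ℝ} (hwpos : ∀ x > 0, 0 < w x)
    (hwsub : Tendsto (fun x => x * Real.log (w x)) (𝓝[>] 0) (𝓝 0))
    {T ε : ι → ℝ} (hT : Tendsto T l atTop) (hε0 : Tendsto ε l (𝓝 0))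
    (hliminf : ∃ c > 0, ∀ᶠ i in l, c ≤ ε i * Real.log (T i)) {α : ℝ} (hα : 0 < α) :
    Tendsto (fun i => T i ^ (-α) * w (ε i)) l (𝓝 0) := by
  obtain ⟨c, hc, hcε⟩ := hliminf
  have hεpos : ∀ᶠ i in l, 0 < ε i := by
    filter_upwards [hcε, hT.eventually_gt_atTop 1] with i hi hTi
    exact pos_of_mul_pos_left (hc.trans_le hi) (Real.log_pos hTi).le
  have hwε : Tendsto (fun i => ε i * Real.log ‖w (ε i)‖) l (𝓝 0) :=
    (hwsub.comp (tendsto_nhdsWithin_iff.2 ⟨hε0, hεpos⟩)).congr' <| hεpos.mono fun i hi => by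
      simp only [Function.comp_apply, Real.norm_of_nonneg (hwpos _ hi).le]
  have hbound : ∀ᶠ i in l, c ≤ ‖ε i • Real.log (T i)‖ :=
    hcε.mono fun i hi => hi.trans (Real.le_norm_self _)
  have hlog : (fun i => Real.log ‖w (ε i)‖) =o[l] fun i => Real.log (T i) :=
    isLittleO_of_tendsto_smul_zero hc hwε hbound
  have hw : (fun i => w (ε i)) =o[l] fun i => T i ^ α :=
    isLittleO_rpow_of_log_isLittleO_log hα hT hlog
  refine hw.tendsto_inv_smul_nhds_zero.congr' ?_
  filter_upwards [hT.eventually_ge_atTop 0] with i hi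
  rw [Real.rpow_neg hi, smul_eq_mul]

/-- If `w` is sub-exponential (`ε ln w(ε) → 0` as `ε → 0⁺`), `ε_t → 0` and
`liminf_{t→∞} ε_t ln t > 0`, then `t^{−α} w(ε_t) → 0` as `t → ∞` for every `α > 0`. -/
theorem stmt12 (w : ℝ → ℝ) (hwpos : ∀ ε > (0 : ℝ), 0 < w ε)
    (hwsub : Tendsto (fun ε => ε * Real.log (w ε)) (𝓝[>] (0 : ℝ)) (𝓝 0))
    (ε : ℝ → ℝ) (hεpos : ∀ t ≥ (1 : ℝ), 0 < ε t)
    (hε0 : Tendsto ε atTop (𝓝 0))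
    (hliminf : ∃ c > (0 : ℝ), ∀ᶠ t in atTop, c ≤ ε t * Real.log t) :
    ∀ α > (0 : ℝ),
      Tendsto (fun t : ℝ => t ^ (-α) * w (ε t)) atTop (𝓝 0) :=
  fun _ hα => stmt12_general hwpos hwsub tendsto_id hε0 hliminf hα
end

section
/- Let d ∈ ℕ, T > 0, and let F : [0,T] × ℝ^d × ℝ^d → ℝ^d be continuous and continuously differentiable in the space variables. Then for all z₀ = (x₀, y₀) and z₁ = (x₁, y₁) in ℝ^d × ℝ^d and every η > 0, there exist a continuous control u : [0,T] → ℝ^d and a C¹ curve z = (x,y) : [0,T] → ℝ^d × ℝ^d such that x'(t) = y(t) and y'(t) = F(t, x(t), y(t)) + u(t) for all t ∈ [0,T], z(0) = z₀, and |z(T) − z₁| ≤ η. -/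
open scoped BigOperators

/-!
The control acts on the whole velocity, so it can cancel the drift: every `C²` curve `x` solves the
system with `y = ẋ` under the feedback control `u = ẍ - F(t, x, ẋ)`. Hence it suffices to join
the two states by a `C²` curve with prescribed endpoint values and derivatives, which a cubic
does, and the target is reached exactly.
-/

section Hermite

variable {𝕜 E : Type*} [NontriviallyNormedField 𝕜] [NormedAddCommGroup E] [NormedSpace 𝕜 E]

/-- The cubic Hermite interpolant with value `x₀` and derivative `y₀` at `a`, and value `x₁` and
derivative `y₁` at `b`, used to join two states of the control system. It is written in Newton form
with nodes `a, a, b, b`; when `a = b` the divisions give `0` and `x₀ + (t - a) • y₀` remains. -/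
def hermiteCubic (a b : 𝕜) (x₀ y₀ x₁ y₁ : E) (t : 𝕜) : E :=
  x₀ + (t - a) • y₀ + ((t - a) ^ 2 / (b - a) ^ 2) • (x₁ - x₀ - (b - a) • y₀) +
    ((t - a) ^ 2 / (b - a) ^ 2 * (t - b)) • (y₀ + y₁ - (2 / (b - a)) • (x₁ - x₀))

variable {a b : 𝕜} {x₀ y₀ x₁ y₁ : E}

theorem contDiff_hermiteCubic {n : WithTop ℕ∞} :
    ContDiff 𝕜 n (hermiteCubic a b x₀ y₀ x₁ y₁) := by
  unfold hermiteCubic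
  fun_prop

theorem hermiteCubic_left : hermiteCubic a b x₀ y₀ x₁ y₁ a = x₀ := by
  simp [hermiteCubic]

theorem hermiteCubic_right (hab : a ≠ b) : hermiteCubic a b x₀ y₀ x₁ y₁ b = x₁ := by
  simp [hermiteCubic, sub_ne_zero.2 hab.symm]

theorem deriv_hermiteCubic (t : 𝕜) :
    deriv (hermiteCubic a b x₀ y₀ x₁ y₁) t =
      y₀ + (2 * (t - a) / (b - a) ^ 2) • (x₁ - x₀ - (b - a) • y₀) +
        ((t - a) * (2 * (t - b) + (t - a)) / (b - a) ^ 2) •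
          (y₀ + y₁ - (2 / (b - a)) • (x₁ - x₀)) := by
  have hlin (c : 𝕜) : HasDerivAt (fun s => s - c) 1 t := (hasDerivAt_id' t).sub_const c
  have hsq : HasDerivAt (fun s : 𝕜 => (s - a) ^ 2 / (b - a) ^ 2) (2 * (t - a) / (b - a) ^ 2) t :=
    (((hlin a).pow 2).div_const _).congr_deriv (by ring)
  have hcub : HasDerivAt (fun s : 𝕜 => (s - a) ^ 2 / (b - a) ^ 2 * (s - b))
      ((t - a) * (2 * (t - b) + (t - a)) / (b - a) ^ 2) t :=
    (hsq.mul (hlin b)).congr_deriv (by ring)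
  simpa only [one_smul] using HasDerivAt.deriv (f := hermiteCubic a b x₀ y₀ x₁ y₁)
    (((((hlin a).smul_const y₀).const_add x₀).add (hsq.smul_const _)).add (hcub.smul_const _))

theorem deriv_hermiteCubic_left : deriv (hermiteCubic a b x₀ y₀ x₁ y₁) a = y₀ := by
  simp [deriv_hermiteCubic]

theorem deriv_hermiteCubic_right (hab : a ≠ b) :
    deriv (hermiteCubic a b x₀ y₀ x₁ y₁) b = y₁ := by
  have hba : b - a ≠ 0 := sub_ne_zero.2 hab.symm
  rw [deriv_hermiteCubic]
  match_scalars <;> field_simp <;> ring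

end Hermite

theorem exists_control_of_contDiff_two {𝕜 E : Type*} [NontriviallyNormedField 𝕜]
    [NormedAddCommGroup E] [NormedSpace 𝕜 E] {F : 𝕜 → E → E → E} {I : Set 𝕜} {x : 𝕜 → E}
    (hx : ContDiff 𝕜 2 x)
    (hF : ContinuousOn (fun p : 𝕜 × (E × E) => F p.1 p.2.1 p.2.2) (I ×ˢ Set.univ)) :
    ∃ u : 𝕜 → E, ContinuousOn u I ∧
      ∀ t, HasDerivAt (deriv x) (F t (x t) (deriv x t) + u t) t := by
  have hderiv : ContDiff 𝕜 1 (deriv x) := hx.deriv'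
  have hdrift : ContinuousOn (fun t => F t (x t) (deriv x t)) I :=
    hF.comp (f := fun t => (t, x t, deriv x t))
      (continuous_id.prodMk (hx.continuous.prodMk hderiv.continuous)).continuousOn
      fun t ht => ⟨ht, Set.mem_univ _⟩
  refine ⟨fun t => deriv (deriv x) t - F t (x t) (deriv x t),
    hderiv.continuous_deriv_one.continuousOn.sub hdrift, fun t => ?_⟩
  rw [add_sub_cancel]
  exact (hderiv.differentiable one_ne_zero t).hasDerivAt

theorem stmt15_general {E : Type*} [NormedAddCommGroup E] [NormedSpace ℝ E] {T : ℝ} (hT : 0 < T)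
    {F : ℝ → E → E → E}
    (hF : ContinuousOn (fun p : ℝ × (E × E) => F p.1 p.2.1 p.2.2) (Set.Icc 0 T ×ˢ Set.univ))
    (x₀ y₀ x₁ y₁ : E) :
    ∃ u : ℝ → E, ContinuousOn u (Set.Icc 0 T) ∧
      ∃ x y : ℝ → E,
        (∀ t ∈ Set.Icc (0 : ℝ) T,
          HasDerivAt x (y t) t ∧ HasDerivAt y (F t (x t) (y t) + u t) t) ∧
        x 0 = x₀ ∧ y 0 = y₀ ∧ x T = x₁ ∧ y T = y₁ := by
  let x := hermiteCubic 0 T x₀ y₀ x₁ y₁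
  have hx : ContDiff ℝ 2 x := contDiff_hermiteCubic
  obtain ⟨u, hu, hy⟩ := exists_control_of_contDiff_two hx hF
  exact ⟨u, hu, x, deriv x,
    fun t _ => ⟨(hx.differentiable two_ne_zero t).hasDerivAt, hy t⟩,
    hermiteCubic_left, deriv_hermiteCubic_left,
    hermiteCubic_right hT.ne, deriv_hermiteCubic_right hT.ne⟩

/-- Approximate controllability of the deterministic kinetic control system
x' = y, y' = F(t,x,y) + u: from any initial state one can steer arbitrarily
close to any target state in time T with a continuous control acting on the
velocity only. -/
theorem stmt15 {d : ℕ} (T : ℝ) (hT : 0 < T)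
    (F : ℝ → (Fin d → ℝ) → (Fin d → ℝ) → (Fin d → ℝ))
    (hFcont : ContinuousOn
      (fun p : ℝ × ((Fin d → ℝ) × (Fin d → ℝ)) => F p.1 p.2.1 p.2.2)
      (Set.Icc 0 T ×ˢ (Set.univ : Set ((Fin d → ℝ) × (Fin d → ℝ)))))
    (hFdiff : ∀ t ∈ Set.Icc (0 : ℝ) T,
      ContDiff ℝ 1 fun q : (Fin d → ℝ) × (Fin d → ℝ) => F t q.1 q.2)
    (x₀ y₀ x₁ y₁ : Fin d → ℝ) (η : ℝ) (hη : 0 < η) :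
    ∃ u : ℝ → Fin d → ℝ, ContinuousOn u (Set.Icc 0 T) ∧
      ∃ x y : ℝ → Fin d → ℝ,
        (∀ t ∈ Set.Icc (0 : ℝ) T,
          HasDerivAt x (y t) t ∧ HasDerivAt y (F t (x t) (y t) + u t) t) ∧
        x 0 = x₀ ∧ y 0 = y₀ ∧
        Real.sqrt ((∑ i, (x T i - x₁ i) ^ 2) + ∑ i, (y T i - y₁ i) ^ 2) ≤ η := by
  obtain ⟨u, hu, x, y, hxy, hx₀, hy₀, rfl, rfl⟩ := stmt15_general hT hFcont x₀ y₀ x₁ y₁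
  exact ⟨u, hu, x, y, hxy, hx₀, hy₀, by simpa using hη.le⟩
end
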